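/- arXiv:2301.07334 — 5 statements merged into one kernel-verified Lean document; each statement's English description precedes it below -/
import Mathlib

section
/- If n, d1, d2, a, b are integers with n ≥ 2, 1 ≤ a ≤ 9, 0 ≤ b ≤ 9, 0 ≤ d2 < d1 and 27·2^{n−2} = a·(10^{d1} − 1) + 9·(b−a)·10^{d2}, then d2 ≤ 3 and d1 ≤ 13. -/
/-- Shifted `k`-generalized Lucas sequence: `genLucas k m` equals `L^{(k)}_{m - (k-2)}`,
so that index `m = 0` corresponds to `n = 2 - k`.  The initial values are
`L^{(k)}_{2-k} = ⋯ = L^{(k)}_{-1} = 0`, `L^{(k)}_0 = 2`, `L^{(k)}_1 = 1`, and each term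
afterwards is the sum of the `k` preceding terms. -/
def genLucas (k : ℕ) : ℕ → ℤ := fun m =>
  if h1 : m < k - 2 then 0
  else if h2 : m = k - 2 then 2
  else if h3 : m = k - 1 then 1
  else ∑ i ∈ Finset.range k, genLucas k (m - 1 - i)
decreasing_by omega

/-- The `k`-generalized Lucas number `L^{(k)}_n` for `n ≥ 0`. -/
def lucasL (k n : ℕ) : ℤ := genLucas k (n + k - 2)
/-- If `27 * 2^(n-2) = a (10^{d1} - 1) + 9 (b - a) 10^{d2}` with digits `1 ≤ a ≤ 9`,
`0 ≤ b ≤ 9` and `0 ≤ d2 < d1`, then `d2 ≤ 3` and `d1 ≤ 13`. -/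
theorem pow_two_repdigit_bound (n d1 d2 : ℕ) (a b : ℤ) (hn : 2 ≤ n)
    (ha1 : 1 ≤ a) (ha9 : a ≤ 9) (hb0 : 0 ≤ b) (hb9 : b ≤ 9) (hd : d2 < d1)
    (heq : 27 * 2 ^ (n - 2) = a * (10 ^ d1 - 1) + 9 * (b - a) * 10 ^ d2) :
    d2 ≤ 3 ∧ d1 ≤ 13 := by
  obtain ⟨e, rfl⟩ : ∃ e, d1 = d2 + 1 + e := ⟨d1 - (d2 + 1), by omega⟩
  generalize n - 2 = m at heq
  have hlow : (10:ℤ) ^ (d2 + e) - 1 ≤ 27 * 2 ^ m := by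
    have h1 : (10:ℤ) ^ (d2 + 1 + e) = 10 * 10 ^ (d2 + e) := by ring
    have h2 : (10:ℤ) ^ d2 ≤ 10 ^ (d2 + e) := pow_le_pow_right₀ (by norm_num) (by omega)
    have h3 : (1:ℤ) ≤ 10 ^ d2 := one_le_pow₀ (by norm_num)
    rw [heq, h1]
    generalize (10:ℤ) ^ (d2 + e) = X at *
    generalize (10:ℤ) ^ d2 = Y at *
    nlinarith [mul_nonneg hb0 (by linarith : (0:ℤ) ≤ Y),
      mul_nonneg (by linarith : (0:ℤ) ≤ a) (by linarith : (0:ℤ) ≤ X - Y),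
      mul_nonneg (by linarith : (0:ℤ) ≤ a - 1) (by linarith : (0:ℤ) ≤ X - 1)]
  have hd2 : d2 ≤ 3 := by
    by_contra hc
    obtain ⟨f, rfl⟩ : ∃ f, d2 = 4 + f := ⟨d2 - 4, by omega⟩
    have hb : (10:ℤ) ^ 4 ≤ 10 ^ (4 + f + e) := pow_le_pow_right₀ (by norm_num) (by omega)
    have hm : 4 ≤ m := by
      by_contra hm
      have : (2:ℤ) ^ m ≤ 2 ^ 3 := pow_le_pow_right₀ (by norm_num) (by omega)
      norm_num at hb this
      linarith
    obtain ⟨g, rfl⟩ : ∃ g, m = 4 + g := ⟨m - 4, by omega⟩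
    have hdvd : (16:ℤ) ∣ a :=
      ⟨a * 625 * 10 ^ (f + 1 + e) + 9 * (b - a) * 625 * 10 ^ f - 27 * 2 ^ g, by
        ring_nf at heq ⊢
        linarith⟩
    omega
  refine ⟨hd2, ?_⟩
  by_contra hc
  have hb : (10:ℤ) ^ 13 ≤ 10 ^ (d2 + e) := pow_le_pow_right₀ (by norm_num) (by omega)
  have hm : 14 ≤ m := by
    by_contra hm
    have : (2:ℤ) ^ m ≤ 2 ^ 14 := pow_le_pow_right₀ (by norm_num) (by omega)
    norm_num at hb this
    linarith
  obtain ⟨g, rfl⟩ : ∃ g, m = 14 + g := ⟨m - 14, by omega⟩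
  obtain ⟨f, hf⟩ : ∃ f, d2 + 1 + e = 14 + f := ⟨d2 + 1 + e - 14, by omega⟩
  rw [hf, pow_add, pow_add] at heq
  have hdvd : (16384:ℤ) ∣ 9 * (b - a) * 10 ^ d2 - a :=
    ⟨27 * 2 ^ g - a * 6103515625 * 10 ^ f, by
      norm_num at heq
      linarith⟩
  clear heq hlow hb hf
  interval_cases d2 <;> interval_cases a <;> omega
end

section
/- For every integer k ≥ 2, the algebraic number f_k(α) = (α−1)/(2 + (k+1)(α−2)) is not an algebraic integer, where α = α(k) is the dominant root of Ψ_k. -/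
open Polynomial IntermediateField NumberField in
theorem aux_nf (K : Type) [Field K] [NumberField K] (hK : 1 < Module.finrank ℚ K)
    (a : 𝓞 K) (ha : Algebra.adjoin ℚ {(a : K)} = ⊤)
    (P : ℤ[X]) (hP : aeval a P = 0) (hu : IsUnit (aeval a (derivative P))) : False := by
  have hint : IsIntegral ℤ a := Algebra.IsIntegral.isIntegral a
  obtain ⟨q, hq⟩ := minpoly.isIntegrallyClosed_dvd hint hP
  rw [hq, derivative_mul] at hu
  simp only [map_add, map_mul, minpoly.aeval, zero_mul, add_zero] at hu
  have h1 := isUnit_of_mul_isUnit_left hu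
  have h2 : aeval a (derivative (minpoly ℤ a)) ∈ differentIdeal ℤ (𝓞 K) :=
    aeval_derivative_mem_differentIdeal ℤ ℚ K a ha
  have h3 := Ideal.eq_top_of_isUnit_mem _ h2 h1
  have h4 := absNorm_differentIdeal K (𝓞 K)
  rw [h3, Ideal.absNorm_top] at h4
  have h5 := abs_discr_gt_two hK
  rw [Int.abs_eq_natAbs, ← h4] at h5
  norm_num at h5

open Polynomial IntermediateField NumberField in
theorem aux_main (k : ℕ) (hk : 2 ≤ k) (α : ℝ) (hα : 1 < α)
    (hroot : α ^ k = ∑ i ∈ Finset.range k, α ^ i) :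
    ¬ IsIntegral ℤ ((α - 1) / (2 + ((k : ℝ) + 1) * (α - 2))) := by
  intro hβ
  obtain ⟨m, rfl⟩ : ∃ m, k = m + 1 := ⟨k - 1, by omega⟩
  set P : ℤ[X] := X ^ (m+1) - ∑ i ∈ Finset.range (m+1), X ^ i with hPdef
  have hPmul : P * (X - 1) = X ^ (m+2) - 2 * X ^ (m+1) + 1 := by
    rw [hPdef, sub_mul, geom_sum_mul]; ring
  have h2 : aeval α (2 : ℤ[X]) = 2 := map_ofNat _ 2
  have hPα : aeval α P = 0 := by
    simp [hPdef, hroot]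
  have hg : α ^ (m+2) - 2 * α ^ (m+1) + 1 = 0 := by
    have := congrArg (aeval α) hPmul
    simpa [hPα, h2] using this.symm
  have hαint : IsIntegral ℤ α := by
    refine ⟨X ^ (m+2) - 2 * X ^ (m+1) + 1, ?_, ?_⟩
    · have : (2 : ℤ[X]) = C 2 := rfl
      rw [this]
      monicity!
    · simpa using hg
  have hirr : α ∉ (⊥ : IntermediateField ℚ ℝ) := by
    intro h
    obtain ⟨r, hr⟩ := IntermediateField.mem_bot.1 h
    have hr1 : IsIntegral ℤ r := by
      rw [← hr] at hαint
      exact (isIntegral_algebraMap_iff (algebraMap ℚ ℝ).injective).1 hαint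
    obtain ⟨n, hn⟩ := IsIntegrallyClosed.isIntegral_iff.1 hr1
    have hn' : α = (n : ℝ) := by rw [← hr, ← hn]; simp
    rw [hn'] at hg hα
    have h1 : (1 : ℤ) < n := by exact_mod_cast hα
    have h2 : n ^ (m+2) - 2 * n ^ (m+1) + 1 = 0 := by exact_mod_cast hg
    have h3 : n ∣ 1 := ⟨2 * n ^ m - n ^ (m+1), by linear_combination h2⟩
    have := Int.le_of_dvd one_pos h3
    omega
  set D : ℝ := 2 + (((m + 1 : ℕ) : ℝ) + 1) * (α - 2) with hD
  have hD0 : D ≠ 0 := by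
    intro h
    apply hirr
    refine IntermediateField.mem_bot.2 ⟨2 - 2 / ((m : ℚ) + 2), ?_⟩
    have : (m : ℝ) + 2 ≠ 0 := by positivity
    rw [hD] at h
    push_cast at h
    simp only [map_sub, map_div₀, map_add, map_natCast, map_ofNat]
    field_simp
    linear_combination -h
  have hder : α ^ m * D = (α - 1) * aeval α (derivative P) := by
    have := congrArg (fun p => aeval α (derivative p)) hPmul
    simp [hPα, h2, derivative_mul] at this
    rw [hD]; push_cast
    linear_combination -this
  set β := (α - 1) / D with hβd
  have hβD : β * D = α - 1 := by rw [hβd]; field_simp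
  have hkey : β * aeval α (derivative P) = α ^ m := by
    have h0 : α - 1 ≠ 0 := by linarith
    apply mul_left_cancel₀ h0
    linear_combination (-β) * hder + α ^ m * hβD
  -- number field
  have hαQ : IsIntegral ℚ α := hαint.tower_top
  have : FiniteDimensional ℚ ℚ⟮α⟯ := IntermediateField.adjoin.finiteDimensional hαQ
  have : NumberField ℚ⟮α⟯ := ⟨⟩
  let K := ℚ⟮α⟯
  have hαK : α ∈ K := mem_adjoin_simple_self ℚ α
  have hβK : β ∈ K := by
    rw [hβd, hD]
    have h2 : (2 : ℝ) ∈ K := by exact_mod_cast K.natCast_mem 2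
    exact div_mem (sub_mem hαK (one_mem _))
      (add_mem h2 (mul_mem (add_mem (IntermediateField.natCast_mem _ _) (one_mem _)) (sub_mem hαK h2)))
  have hinj : Function.Injective (algebraMap K ℝ) := (algebraMap K ℝ).injective
  let a : 𝓞 K := ⟨⟨α, hαK⟩, (isIntegral_algebraMap_iff hinj).1 hαint⟩
  let b : 𝓞 K := ⟨⟨β, hβK⟩, (isIntegral_algebraMap_iff hinj).1 hβ⟩
  have hinj2 : Function.Injective (algebraMap (𝓞 K) ℝ) := 
    FaithfulSMul.algebraMap_injective _ _
  have haα : algebraMap (𝓞 K) ℝ a = α := rfl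
  have hbβ : algebraMap (𝓞 K) ℝ b = β := rfl
  have hfin : 1 < Module.finrank ℚ K := by
    have h1 : Module.finrank ℚ K ≠ 1 := fun h => hirr (finrank_adjoin_simple_eq_one_iff.1 h)
    have h2 : 0 < Module.finrank ℚ K := Module.finrank_pos
    omega
  have hau : IsUnit a := by
    refine IsUnit.of_mul_eq_one (2 * a ^ m - a ^ (m+1)) ?_
    apply hinj2
    simp only [map_mul, map_sub, map_pow, map_ofNat, map_one, haα]
    linear_combination -hg
  refine aux_nf K hfin a ?_ P ?_ ?_
  · have := (adjoin.powerBasis hαQ).adjoin_gen_eq_top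
    rw [adjoin.powerBasis_gen] at this
    exact this
  · apply hinj2
    rw [← aeval_algebraMap_apply, haα, hPα, map_zero]
  · have : b * aeval a (derivative P) = a ^ m := by
      apply hinj2
      rw [map_mul, ← aeval_algebraMap_apply, haα, hbβ, hkey, map_pow, haα]
    exact isUnit_of_mul_isUnit_right (this ▸ hau.pow m)

/-- For `k ≥ 2`, the number `f_k(α) = (α-1)/(2 + (k+1)(α-2))` is not an algebraic
integer, where `α` is the dominant root of `Ψ_k(x) = x^k - x^{k-1} - ⋯ - x - 1`. -/
theorem fk_alpha_not_algebraic_integer (k : ℕ) (hk : 2 ≤ k) (α : ℝ) (hα : 1 < α)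
    (hroot : α ^ k = ∑ i ∈ Finset.range k, α ^ i) :
    ¬ IsIntegral ℤ ((α - 1) / (2 + ((k : ℝ) + 1) * (α - 2))) := by
  exact aux_main k hk α hα hroot
end

section
/- Let k ≥ 2, let α be the dominant root of Ψ_k and f_k(x) = (x−1)/(2 + (k+1)(x−2)). For all integers n ≥ 2, d1 ≥ 3 and 1 ≤ a ≤ 9, one has f_k(α)·(2α − 1)·α^{n−1} ≠ a·10^{d1}/9. -/
lemma aux_pow (R : Type*) [CommRing R] (x : R) (k : ℕ) (h : x ^ k = ∑ i ∈ Finset.range k, x ^ i) :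
    x ^ k * (2 - x) = 1 := by
  have := geom_sum_mul x k
  rw [← h] at this
  linear_combination -this

lemma aux_unique_lt (k : ℕ) (hk : 2 ≤ k) (x y : ℝ) (hx : 0 < x) (hxy : x < y)
    (h1 : x ^ k = ∑ i ∈ Finset.range k, x ^ i) (h2 : y ^ k = ∑ i ∈ Finset.range k, y ^ i) :
    False := by
  have hy : 0 < y := hx.trans hxy
  have : ∑ i ∈ Finset.range k, y ^ i * x ^ k < ∑ i ∈ Finset.range k, x ^ i * y ^ k := by
    apply Finset.sum_lt_sum_of_nonempty
    · exact ⟨0, Finset.mem_range.2 (by omega)⟩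
    · intro i hi
      have hi := Finset.mem_range.1 hi
      obtain ⟨j, rfl⟩ := Nat.exists_eq_add_of_lt hi
      have h3 : x ^ (j + 1) < y ^ (j + 1) := pow_lt_pow_left₀ hxy hx.le (by omega)
      have h4 : 0 < x ^ i * y ^ i := by positivity
      have e1 : y ^ i * x ^ (i + j + 1) = (x ^ i * y ^ i) * x ^ (j + 1) := by ring
      have e2 : x ^ i * y ^ (i + j + 1) = (x ^ i * y ^ i) * y ^ (j + 1) := by ring
      rw [e1, e2]
      exact mul_lt_mul_of_pos_left h3 h4
  rw [← Finset.sum_mul, ← Finset.sum_mul, ← h1, ← h2, mul_comm] at this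
  exact lt_irrefl _ this

lemma aux_unique (k : ℕ) (hk : 2 ≤ k) (x y : ℝ) (hx : 0 < x) (hy : 0 < y)
    (h1 : x ^ k = ∑ i ∈ Finset.range k, x ^ i) (h2 : y ^ k = ∑ i ∈ Finset.range k, y ^ i) :
    x = y := by
  rcases lt_trichotomy x y with h | h | h
  · exact (aux_unique_lt k hk x y hx h h1 h2).elim
  · exact h
  · exact (aux_unique_lt k hk y x hy h h2 h1).elim

lemma aux_norm (k : ℕ) (hk : 2 ≤ k) (α : ℝ) (hα : 1 < α)
    (hroot : α ^ k = ∑ i ∈ Finset.range k, α ^ i) (β : ℂ) (hne : β ≠ α)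
    (hβ : β ^ k = ∑ i ∈ Finset.range k, β ^ i) : ‖β‖ ≤ 1 := by
  by_contra! hr
  have h1 : ‖β‖ ^ k ≤ ∑ i ∈ Finset.range k, ‖β‖ ^ i := by
    rw [← norm_pow, hβ]
    refine (norm_sum_le _ _).trans (le_of_eq ?_)
    simp
  have h2 := aux_pow ℂ β k hβ
  have h3 : ‖β‖ ^ k * ‖2 - β‖ = 1 := by rw [← norm_pow, ← norm_mul, h2, norm_one]
  have h4 := geom_sum_mul ‖β‖ k
  have h5 : 1 ≤ ‖β‖ ^ k * (2 - ‖β‖) := by nlinarith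
  have hp : 0 < ‖β‖ ^ k := by positivity
  have h6 : ‖2 - β‖ ≤ 2 - ‖β‖ := by
    rw [← h3] at h5
    exact le_of_mul_le_mul_left h5 hp
  have h7 : 2 - β.re ≤ ‖2 - β‖ := by simpa using Complex.re_le_norm (2 - β)
  have h8 := Complex.re_le_norm β
  have h9 : β.re = ‖β‖ := by linarith
  have h10 : β = (β.re : ℂ) := by
    have e := Complex.sq_norm β
    rw [Complex.normSq_apply, ← h9] at e
    have : β.im = 0 := by nlinarith
    apply Complex.ext <;> simp [this]
  apply hne
  have h11 : β.re ^ k = ∑ i ∈ Finset.range k, β.re ^ i := by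
    rw [h10] at hβ
    exact_mod_cast hβ
  rw [h10, aux_unique k hk β.re α (by linarith) (by linarith) h11 hroot]

open Polynomial in
lemma aux_conj (k : ℕ) (hk : 2 ≤ k) (α : ℝ) (hα : 1 < α)
    (hroot : α ^ k = ∑ i ∈ Finset.range k, α ^ i) :
    ∃ β : ℂ, β ≠ α ∧ ∀ p : ℚ[X], aeval α p = 0 → aeval β p = 0 := by
  have h1 := aux_pow ℝ α k hroot
  have h2 : α < 2 := by
    have : 0 < α ^ k := by positivity
    by_contra! h
    nlinarith
  have hint : IsIntegral ℤ α := by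
    refine ⟨X ^ k * (X - C 2) + 1, ?_, ?_⟩
    · apply Monic.add_of_left
      · exact (monic_X_pow k).mul (monic_X_sub_C 2)
      · rw [degree_mul, degree_X_pow, degree_X_sub_C, degree_one]
        exact_mod_cast Nat.succ_pos k
    · simp
      linear_combination -h1
  have hintQ : IsIntegral ℚ α := hint.tower_top
  have hdeg : (minpoly ℚ α).natDegree ≠ 1 := by
    intro h
    obtain ⟨q, hq⟩ := (minpoly.natDegree_eq_one_iff).1 h
    have hqi : IsIntegral ℤ q := by
      rw [← hq] at hint
      exact (isIntegral_algebraMap_iff (algebraMap ℚ ℝ).injective).1 hint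
    obtain ⟨m, hm⟩ := IsIntegrallyClosed.isIntegral_iff.1 hqi
    have : α = (m : ℝ) := by rw [← hq, ← hm]; simp
    rw [this] at hα h2
    have a1 : 1 < m := by exact_mod_cast hα
    have a2 : m < 2 := by exact_mod_cast h2
    omega
  have hpos := minpoly.natDegree_pos hintQ
  have hcard : Fintype.card ((minpoly ℚ α).rootSet ℂ) = (minpoly ℚ α).natDegree :=
    card_rootSet_eq_natDegree (minpoly.irreducible hintQ).separable (IsAlgClosed.splits _)
  have : ∃ β ∈ (minpoly ℚ α).rootSet ℂ, β ≠ (α : ℂ) := by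
    by_contra! h
    have : Fintype.card ((minpoly ℚ α).rootSet ℂ) ≤ 1 := by
      rw [Fintype.card_le_one_iff]
      rintro ⟨x, hx⟩ ⟨y, hy⟩
      exact Subtype.ext ((h x hx).trans (h y hy).symm)
    omega
  obtain ⟨β, hβ, hne⟩ := this
  refine ⟨β, hne, fun p hp => ?_⟩
  obtain ⟨q, rfl⟩ := minpoly.dvd ℚ α hp
  rw [map_mul, (mem_rootSet.1 hβ).2, zero_mul]

/-- Nonvanishing of `Λ₁`: for `k ≥ 2`, `n ≥ 2`, `d1 ≥ 3` and `1 ≤ a ≤ 9`, one has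
`f_k(α)(2α-1)α^{n-1} ≠ a 10^{d1}/9`, where `α` is the dominant root of `Ψ_k`. -/
theorem lambda1_ne_zero (k : ℕ) (hk : 2 ≤ k) (α : ℝ) (hα : 1 < α)
    (hroot : α ^ k = ∑ i ∈ Finset.range k, α ^ i)
    (n d1 : ℕ) (a : ℤ) (hn : 2 ≤ n) (hd1 : 3 ≤ d1) (ha1 : 1 ≤ a) (ha9 : a ≤ 9) :
    (α - 1) / (2 + ((k : ℝ) + 1) * (α - 2)) * (2 * α - 1) * α ^ (n - 1)
      ≠ (a : ℝ) * 10 ^ d1 / 9 := by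
  intro heq
  have hN : (1000 : ℝ) ≤ (a : ℝ) * 10 ^ d1 := by
    have e1 : (1 : ℝ) ≤ a := by exact_mod_cast ha1
    have e2 : (10 : ℝ) ^ 3 ≤ 10 ^ d1 := pow_le_pow_right₀ (by norm_num) hd1
    nlinarith
  have hden : 2 + ((k : ℝ) + 1) * (α - 2) ≠ 0 := by
    intro h
    rw [h] at heq
    simp only [div_zero, zero_mul] at heq
    linarith
  have hkey : 9 * (α - 1) * (2 * α - 1) * α ^ (n - 1)
      - (a : ℝ) * 10 ^ d1 * (2 + ((k : ℝ) + 1) * (α - 2)) = 0 := by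
    field_simp at heq
    linear_combination heq
  obtain ⟨β, hne, hβ⟩ := aux_conj k hk α hα hroot
  have hb1 := hβ (Polynomial.X ^ k - ∑ i ∈ Finset.range k, Polynomial.X ^ i)
    (by simp [hroot])
  have hb2 := hβ (9 * (Polynomial.X - 1) * (2 * Polynomial.X - 1) * Polynomial.X ^ (n - 1)
      - (a : Polynomial ℚ) * 10 ^ d1 * (2 + ((k : Polynomial ℚ) + 1) * (Polynomial.X - 2)))
    (by simpa only [map_sub, map_mul, map_add, map_pow, Polynomial.aeval_X, map_one,
      map_ofNat, map_natCast, map_intCast] using hkey)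
  simp only [map_sub, map_mul, map_add, map_pow, map_sum, Polynomial.aeval_X, map_one,
    map_ofNat, map_natCast, map_intCast] at hb1 hb2
  have hnb := aux_norm k hk α hα hroot β hne (sub_eq_zero.1 hb1)
  have h1 : ‖β - 1‖ ≤ 2 := by
    have := norm_sub_le β 1
    rw [norm_one] at this
    linarith
  have h2 : ‖2 * β - 1‖ ≤ 3 := by
    have := norm_sub_le (2 * β) 1
    rw [norm_one, norm_mul, Complex.norm_ofNat] at this
    linarith
  have h3 : ‖β‖ ^ (n - 1) ≤ 1 := pow_le_one₀ (norm_nonneg _) hnb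
  have h4 : 1 ≤ ‖β - 2‖ := by
    have := norm_sub_norm_le 2 β
    rw [norm_sub_rev, Complex.norm_ofNat] at this
    linarith
  have h5 : 1 ≤ ‖2 + ((k : ℂ) + 1) * (β - 2)‖ := by
    have := norm_sub_le (2 + ((k : ℂ) + 1) * (β - 2)) 2
    rw [add_sub_cancel_left, norm_mul, Complex.norm_ofNat] at this
    have e : ‖(k : ℂ) + 1‖ = (k : ℝ) + 1 := by
      exact_mod_cast Complex.norm_natCast (k + 1)
    rw [e] at this
    have hk' : (2 : ℝ) ≤ k := by exact_mod_cast hk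
    nlinarith
  have h6 := congrArg norm (sub_eq_zero.1 hb2)
  rw [norm_mul, norm_mul, norm_mul, norm_mul ((a : ℂ) * 10 ^ d1), norm_pow] at h6
  have e : ‖(a : ℂ) * 10 ^ d1‖ = (a : ℝ) * 10 ^ d1 := by
    have : ((a : ℂ) * 10 ^ d1) = (((a : ℝ) * 10 ^ d1 : ℝ) : ℂ) := by push_cast; rfl
    rw [this, Complex.norm_real, Real.norm_of_nonneg (by linarith)]
  rw [e, Complex.norm_ofNat] at h6
  have h7 : 9 * ‖β - 1‖ * ‖2 * β - 1‖ * ‖β‖ ^ (n - 1) ≤ 9 * 2 * 3 * 1 := by gcongr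
  nlinarith
end

section
/- Let k ≥ 2, n ≥ k+1, n > 5, and suppose L_n^{(k)} = a·(10^{d1}−1)/9 + (b−a)·10^{d2} with integers 0 ≤ d2 < d1, d1 ≥ 3, 1 ≤ a ≤ 9 and 0 ≤ b ≤ 9. Then |α^{n−1}·10^{−d1}·f_k(α)·(2α−1)·(9/a) − 1| ≤ 87/10^{d1−d2}, where α is the dominant root of Ψ_k and f_k(x) = (x−1)/(2 + (k+1)(x−2)). -/
theorem genLucas_lt (k m : ℕ) (h : m < k - 2) : genLucas k m = 0 := by
  rw [genLucas]; simp [h]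

theorem genLucas_zero (k : ℕ) : genLucas k (k - 2) = 2 := by
  rw [genLucas]; simp

theorem genLucas_one (k : ℕ) (hk : 2 ≤ k) : genLucas k (k - 1) = 1 := by
  rw [genLucas, dif_neg (by omega), dif_neg (by omega), dif_pos rfl]

theorem genLucas_rec (k j : ℕ) (hk : 2 ≤ k) :
    genLucas k (j + k) = ∑ i ∈ Finset.range k, genLucas k (j + i) := by
  rw [genLucas, dif_neg (by omega), dif_neg (by omega), dif_neg (by omega),
    ← Finset.sum_range_reflect]
  apply Finset.sum_congr rfl
  intro i hi
  have := Finset.mem_range.1 hi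
  congr 1
  omega

theorem conv_bound (k : ℕ) (hk : 2 ≤ k) (β M : ℝ) (hβ : 0 < β) (E : ℕ → ℝ)
    (hsum : ∑ i ∈ Finset.range k, β ^ (i + 1) = 1)
    (hE : ∀ j, E (j + k) = ∑ i ∈ Finset.range k, β ^ (i + 1) * E (j + i))
    (h0 : ∀ m < k, |E m| ≤ M) (m : ℕ) : |E m| ≤ M := by
  induction m using Nat.strong_induction_on with
  | _ m ih =>
    by_cases h : m < k
    · exact h0 m h
    · obtain ⟨j, rfl⟩ : ∃ j, m = j + k := ⟨m - k, by omega⟩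
      rw [hE]
      calc |∑ i ∈ Finset.range k, β ^ (i + 1) * E (j + i)|
          ≤ ∑ i ∈ Finset.range k, |β ^ (i + 1) * E (j + i)| := Finset.abs_sum_le_sum_abs _ _
        _ ≤ ∑ i ∈ Finset.range k, β ^ (i + 1) * M := by
            apply Finset.sum_le_sum
            intro i hi
            have := Finset.mem_range.1 hi
            rw [abs_mul, abs_of_pos (pow_pos hβ _)]
            exact mul_le_mul_of_nonneg_left (ih _ (by omega)) (pow_pos hβ _).le
        _ = M := by rw [← Finset.sum_mul, hsum, one_mul]

theorem rec_two (k j : ℕ) (E : ℕ → ℝ)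
    (h : ∀ j, E (j + k) = ∑ i ∈ Finset.range k, E (j + i)) :
    E (j + 1 + k) = 2 * E (j + k) - E j := by
  have h1 := h (j + 1)
  have h2 := h j
  have h3 := Finset.sum_range_succ (fun i => E (j + i)) k
  rw [Finset.sum_range_succ'] at h3
  have h4 : ∑ i ∈ Finset.range k, E (j + 1 + i) = ∑ i ∈ Finset.range k, E (j + (i + 1)) :=
    Finset.sum_congr rfl fun i _ => by congr 1; omega
  simp only [add_zero] at h3
  linarith

theorem rec_conv (k : ℕ) (α β : ℝ) (hab : α * β = 1) (h2 : α + β ^ k = 2) (E : ℕ → ℝ)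
    (h : ∀ j, E (j + k) = ∑ i ∈ Finset.range k, E (j + i))
    (h0 : E k = ∑ i ∈ Finset.range k, β ^ (i + 1) * E i) (j : ℕ) :
    E (j + k) = ∑ i ∈ Finset.range k, β ^ (i + 1) * E (j + i) := by
  induction j with
  | zero => simpa using h0
  | succ j ih =>
    have h1 := rec_two k j E h
    have h3 := Finset.sum_range_succ (fun i => β ^ i * E (j + i)) k
    rw [Finset.sum_range_succ'] at h3
    have h4 : ∑ i ∈ Finset.range k, β ^ (i + 1) * E (j + 1 + i)
        = ∑ i ∈ Finset.range k, β ^ (i + 1) * E (j + (i + 1)) :=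
      Finset.sum_congr rfl fun i _ => by congr 2; omega
    have h5 : ∑ i ∈ Finset.range k, β ^ i * E (j + i) = α * E (j + k) := by
      rw [ih, Finset.mul_sum]
      apply Finset.sum_congr rfl
      intro i _
      rw [pow_succ]
      linear_combination (-(β ^ i * E (j + i))) * hab
    simp only [add_zero, pow_zero, one_mul] at h3
    rw [h4, h1]
    linear_combination (-1) * h3 - h5 - E (j + k) * h2

theorem root_facts (k : ℕ) (hk : 2 ≤ k) (α : ℝ) (hα : 1 < α)
    (hroot : α ^ k = ∑ i ∈ Finset.range k, α ^ i) :
    (2 - α) * α ^ k = 1 ∧ α + 1 ≤ α ^ 2 ∧ 3 * (k : ℝ) - 1 ≤ 2 * α ^ k := by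
  have hA : (2 - α) * α ^ k = 1 := by
    have := geom_sum_mul α k
    rw [← hroot] at this
    linarith
  have hB : α + 1 ≤ α ^ 2 := by
    obtain ⟨l, rfl⟩ : ∃ l, k = l + 2 := ⟨k - 2, by omega⟩
    rw [Finset.sum_range_succ, Finset.sum_range_succ] at hroot
    have h1 : 0 ≤ ∑ i ∈ Finset.range l, α ^ i := Finset.sum_nonneg fun i _ => by positivity
    have h2 : 0 < α ^ l := by positivity
    have h3 : α ^ l * (α + 1) ≤ α ^ l * α ^ 2 := by
      rw [← pow_add, hroot, pow_succ]; linarith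
    exact le_of_mul_le_mul_left h3 h2
  refine ⟨hA, hB, ?_⟩
  have hC : 8 / 5 ≤ α := by nlinarith
  clear hA hroot
  induction k, hk using Nat.le_induction with
  | base => norm_num; linarith
  | succ m hm ih =>
    have hm' : (2 : ℝ) ≤ m := by exact_mod_cast hm
    rw [pow_succ]
    push_cast
    nlinarith [pow_pos (zero_lt_one.trans hα) m]

theorem lucas_est (k m : ℕ) (hk : 2 ≤ k) (α : ℝ) (hα : 1 < α)
    (hroot : α ^ k = ∑ i ∈ Finset.range k, α ^ i) (C : ℝ)
    (hC : C * α ^ (k - 1) = (α - 1) / (2 + ((k : ℝ) + 1) * (α - 2)) * (2 * α - 1)) :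
    |(genLucas k m : ℝ) - C * α ^ m| ≤ 3 / 2 := by
  obtain ⟨hA, hB, hK⟩ := root_facts k hk α hα hroot
  have hα0 : 0 < α := by linarith
  have hk' : (2 : ℝ) ≤ k := by exact_mod_cast hk
  have hp : 0 < α ^ k := by positivity
  have he : 0 < 2 - α := by
    by_contra hh
    nlinarith
  have hkε : (3 * (k : ℝ) - 1) * (2 - α) ≤ 2 := by nlinarith
  have hD : 0 < 2 + ((k : ℝ) + 1) * (α - 2) := by nlinarith
  set f := (α - 1) / (2 + ((k : ℝ) + 1) * (α - 2)) with hf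
  have hf1 : 1 / 2 ≤ f := by rw [hf, le_div_iff₀ hD]; nlinarith
  have hf2 : f ≤ 3 / 4 := by rw [hf, div_le_iff₀ hD]; nlinarith
  have hfD : f * (2 + ((k : ℝ) + 1) * (α - 2)) = α - 1 := by
    rw [hf]; field_simp
  have hC0 : 0 < C := by
    have : 0 < C * α ^ (k - 1) := by rw [hC]; nlinarith
    exact pos_of_mul_pos_left this (by positivity)
  have hg2 : f * (2 * α - 1) ≤ 9 / 4 := by nlinarith
  have hg1 : α / 2 ≤ f * (2 * α - 1) := by nlinarith
  have hab : α * α⁻¹ = 1 := mul_inv_cancel₀ hα0.ne'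
  have hβk : (α⁻¹) ^ k = 2 - α := by
    rw [inv_pow]; exact (eq_inv_of_mul_eq_one_left hA).symm
  have hsum : ∑ i ∈ Finset.range k, (α⁻¹) ^ (i + 1) = 1 := by
    have h1 := geom_sum_mul α⁻¹ k
    rw [hβk] at h1
    simp only [pow_succ, ← Finset.sum_mul]
    have h2 : (α - 1) * (∑ i ∈ Finset.range k, (α⁻¹) ^ i * α⁻¹) = (α - 1) * 1 := by
      rw [← Finset.sum_mul]
      linear_combination (-1) * h1 + (∑ i ∈ Finset.range k, (α⁻¹) ^ i) * hab
    rw [← Finset.sum_mul] at h2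
    exact mul_left_cancel₀ (by linarith) h2
  refine conv_bound k hk α⁻¹ (3 / 2) (by positivity)
    (fun m => (genLucas k m : ℝ) - C * α ^ m) hsum ?_ ?_ m
  · refine rec_conv k α α⁻¹ hab (by rw [hβk]; ring)
      (fun m => (genLucas k m : ℝ) - C * α ^ m) ?_ ?_
    · intro j
      beta_reduce
      rw [genLucas_rec k j hk, Finset.sum_sub_distrib, ← Finset.mul_sum]
      simp only [pow_add, ← Finset.mul_sum]
      rw [← hroot]
      push_cast
      ring
    · have hG : (genLucas k k : ℝ) = 3 ∧
          ∑ i ∈ Finset.range k, (α⁻¹) ^ (i + 1) * (genLucas k i : ℝ)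
            = 2 * (α * (2 - α)) + (2 - α) := by
        obtain ⟨l, rfl⟩ : ∃ l, k = l + 2 := ⟨k - 2, by omega⟩
        have e0 : genLucas (l + 2) l = 2 := genLucas_zero (l + 2)
        have e1 : genLucas (l + 2) (l + 1) = 1 := genLucas_one (l + 2) hk
        have ez : ∀ i ∈ Finset.range l, genLucas (l + 2) i = 0 := fun i hi =>
          genLucas_lt _ _ (by simpa using hi)
        constructor
        · have := genLucas_rec (l + 2) 0 hk
          simp only [zero_add] at this
          rw [this, Finset.sum_range_succ, Finset.sum_range_succ, Finset.sum_eq_zero ez, e0, e1]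
          norm_num
        · rw [Finset.sum_range_succ, Finset.sum_range_succ, e0, e1, Finset.sum_eq_zero]
          · rw [← hβk]
            push_cast
            rw [show l + 2 = l + 1 + 1 from rfl, pow_succ _ (l + 1)]
            linear_combination (-2 * (α⁻¹) ^ (l + 1)) * hab
          · intro i hi
            rw [ez i hi]; simp
      have hS : ∑ i ∈ Finset.range k, (α⁻¹) ^ (i + 1) * (C * α ^ i) = k * (C * α⁻¹) := by
        rw [Finset.sum_congr rfl (g := fun _ => C * α⁻¹)]
        · simp
        · intro i _
          rw [pow_succ, inv_pow]
          field_simp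
      simp only [mul_sub, Finset.sum_sub_distrib]
      rw [hG.1, hG.2, hS]
      have h1 : C * α ^ k = f * (2 * α - 1) * α := by
        rw [← hC, mul_assoc, ← pow_succ]; congr 2; omega
      have h2 : C * α⁻¹ = f * (2 * α - 1) * (2 - α) := by
        linear_combination (2 - α) * α⁻¹ * h1 + (2 - α) * f * (2 * α - 1) * hab
          - C * α⁻¹ * hA
      rw [h1, h2]
      linear_combination (-(2 * α - 1)) * hfD
  · intro m hm
    by_cases h1 : m < k - 2
    · rw [genLucas_lt k m h1]
      have h3 : C * α ^ m * α ^ 2 ≤ C * α ^ (k - 1) := by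
        rw [mul_assoc, ← pow_add]
        exact mul_le_mul_of_nonneg_left (pow_le_pow_right₀ hα.le (by omega)) hC0.le
      have h4 : 0 < C * α ^ m := by positivity
      have h5 : 2 * (C * α ^ m) ≤ C * α ^ m * α ^ 2 := by nlinarith
      rw [abs_le]; push_cast
      constructor <;> linarith
    · by_cases h2 : m = k - 2
      · subst h2
        rw [genLucas_zero]
        have h3 : C * α ^ (k - 2) * α = f * (2 * α - 1) := by
          rw [← hC, mul_assoc, ← pow_succ]; congr 2; omega
        have h4 : 0 < C * α ^ (k - 2) := by positivity
        rw [abs_le]; push_cast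
        constructor <;> nlinarith
      · obtain rfl : m = k - 1 := by omega
        rw [genLucas_one k hk, hC, abs_le]; push_cast
        constructor <;> linarith

/-- The bound `|α^{n-1} 10^{-d1} f_k(α)(2α-1)(9/a) - 1| ≤ 87/10^{d1-d2}` on the linear
form `Λ₁`. -/
theorem lambda1_bound (k n : ℕ) (hk : 2 ≤ k) (hnk : k + 1 ≤ n) (hn : 5 < n)
    (d1 d2 : ℕ) (a b : ℤ) (hd : d2 < d1) (hd1 : 3 ≤ d1)
    (ha1 : 1 ≤ a) (ha9 : a ≤ 9) (hb0 : 0 ≤ b) (hb9 : b ≤ 9)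
    (heq : lucasL k n = a * ((10 ^ d1 - 1) / 9) + (b - a) * 10 ^ d2)
    (α : ℝ) (hα : 1 < α) (hroot : α ^ k = ∑ i ∈ Finset.range k, α ^ i) :
    |α ^ (n - 1) / 10 ^ d1 * ((α - 1) / (2 + ((k : ℝ) + 1) * (α - 2)))
        * (2 * α - 1) * (9 / (a : ℝ)) - 1|
      ≤ 87 / 10 ^ (d1 - d2) := by
  have hα0 : 0 < α := by linarith
  have hest := lucas_est k (n + k - 2) hk α hα hroot
    ((α - 1) / (2 + ((k : ℝ) + 1) * (α - 2)) * (2 * α - 1) / α ^ (k - 1))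
    (div_mul_cancel₀ _ (by positivity))
  have hX : (α - 1) / (2 + ((k : ℝ) + 1) * (α - 2)) * (2 * α - 1) / α ^ (k - 1)
      * α ^ (n + k - 2)
      = α ^ (n - 1) * ((α - 1) / (2 + ((k : ℝ) + 1) * (α - 2))) * (2 * α - 1) := by
    rw [show n + k - 2 = (n - 1) + (k - 1) by omega, pow_add]
    generalize (α - 1) / (2 + ((k : ℝ) + 1) * (α - 2)) = f
    field_simp
  rw [hX] at hest
  have h9 : 9 * lucasL k n = a * (10 ^ d1 - 1) + 9 * ((b - a) * 10 ^ d2) := by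
    have hdvd : (9 : ℤ) ∣ 10 ^ d1 - 1 := by
      simpa using sub_dvd_pow_sub_pow (10 : ℤ) 1 d1
    have := Int.mul_ediv_cancel' hdvd
    rw [heq]
    linear_combination a * this
  have hL : (genLucas k (n + k - 2) : ℝ) = (lucasL k n : ℝ) := rfl
  rw [hL] at hest
  have h9' : 9 * (lucasL k n : ℝ) = a * (10 ^ d1 - 1) + 9 * ((b - a) * 10 ^ d2) := by
    exact_mod_cast h9
  have hpow : (10 : ℝ) ^ d1 = 10 ^ d2 * 10 ^ (d1 - d2) := by
    rw [← pow_add]; congr 1; omega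
  have hP : (1 : ℝ) ≤ 10 ^ d2 := one_le_pow₀ (by norm_num)
  have hQ : (0 : ℝ) < 10 ^ (d1 - d2) := by positivity
  have ha1' : (1 : ℝ) ≤ a := by exact_mod_cast ha1
  have hb0' : (0 : ℝ) ≤ b := by exact_mod_cast hb0
  have hb9' : (b : ℝ) ≤ 9 := by exact_mod_cast hb9
  have hre : α ^ (n - 1) / 10 ^ d1 * ((α - 1) / (2 + ((k : ℝ) + 1) * (α - 2)))
        * (2 * α - 1) * (9 / (a : ℝ)) = 9 * (α ^ (n - 1)
        * ((α - 1) / (2 + ((k : ℝ) + 1) * (α - 2))) * (2 * α - 1)) / (a * 10 ^ d1) := by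
    generalize (α - 1) / (2 + ((k : ℝ) + 1) * (α - 2)) = f
    field_simp
  rw [hre]
  generalize α ^ (n - 1) * ((α - 1) / (2 + ((k : ℝ) + 1) * (α - 2))) * (2 * α - 1) = X at *
  generalize (lucasL k n : ℝ) = L at *
  rw [hpow] at *
  generalize (10 : ℝ) ^ d2 = P at *
  generalize (10 : ℝ) ^ (d1 - d2) = Q at *
  have hP0 : 0 < P := by linarith
  have ha0 : (0 : ℝ) < a := by linarith
  have hden : 0 < a * (P * Q) := by positivity
  have e1 : 9 * X / (a * (P * Q)) - 1 = (9 * X - a * (P * Q)) / (a * (P * Q)) := by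
    field_simp
  have e2 : 87 / Q = (87 * a * P) / (a * (P * Q)) := by field_simp
  rw [e1, e2, abs_div, abs_of_pos hden]
  apply div_le_div_of_nonneg_right _ hden.le
  obtain ⟨q1, q2⟩ := abs_le.1 hest
  have haP : P ≤ a * P := by nlinarith
  have haP2 : (a : ℝ) ≤ a * P := by nlinarith
  have u1 : (b - a) * P ≤ 8 * a * P := mul_le_mul_of_nonneg_right (by linarith) hP0.le
  have u2 : -(8 * a) * P ≤ (b - a) * P := mul_le_mul_of_nonneg_right (by linarith) hP0.le
  rw [abs_le]
  constructor <;> nlinarith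
end

section
/- There are no integers m ≥ 0, d1 ≥ 3, d2 with 0 ≤ d2 < d1, a with 1 ≤ a ≤ 9, and b with 0 ≤ b ≤ 9 such that 9·2^{m} = a·10^{d1} + 9·(b−a)·10^{d2}. In particular, for d1 ≥ 3 and 0 ≤ b ≤ 9 the equation 2^{m} = 10^{d1} + b − 9 has no solutions. -/
theorem key_five (m : ℕ) (x : ℤ) : (2 ^ m : ℤ) ≠ 5 * x := by
  intro h
  have h5 : Prime (5 : ℤ) := by norm_num
  have h2 : (5 : ℤ) ∣ 2 := h5.dvd_of_dvd_pow (Dvd.intro _ h.symm)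
  omega

theorem key_part (m d1 : ℕ) (b : ℤ) (hd : 3 ≤ d1) (hb : 0 ≤ b) (hb' : b ≤ 9) :
    (2 ^ m : ℤ) ≠ 10 ^ d1 + b - 9 := by
  intro h
  obtain ⟨e, rfl⟩ := Nat.exists_eq_add_of_le hd
  have hpos : (0 : ℤ) < 10 ^ e := by positivity
  have he : (10 : ℤ) ^ (3 + e) = 1000 * 10 ^ e := by rw [pow_add]; norm_num
  rw [he] at h
  have hm : 5 ≤ m := by
    by_contra hlt
    have : m < 5 := by omega
    interval_cases m <;> omega
  obtain ⟨k, rfl⟩ := Nat.exists_eq_add_of_le hm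
  have hk : (2 : ℤ) ^ (5 + k) = 32 * 2 ^ k := by rw [pow_add]; norm_num
  have h5 := key_five (5 + k) (200 * 10 ^ e)
  rw [hk] at h h5
  have hb1 : b = 1 := by omega
  subst hb1
  rcases Nat.eq_zero_or_pos e with rfl | hepos
  · have h31 : (2 : ℤ) ^ k = 31 := by omega
    rcases k with _ | k
    · norm_num at h31
    · rw [pow_succ] at h31; omega
  · obtain ⟨f, rfl⟩ := Nat.exists_eq_add_of_le hepos
    have hf : (10 : ℤ) ^ (Nat.succ 0 + f) = 10 * 10 ^ f := by rw [pow_add]; norm_num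
    rw [hf] at h
    omega

/-- Nonvanishing of `Λ₄`: the equation `9·2^m = a·10^{d1} + 9(b-a)·10^{d2}` has no
solutions with `d1 ≥ 3`, `0 ≤ d2 < d1`, `1 ≤ a ≤ 9`, `0 ≤ b ≤ 9`; in particular
`2^m = 10^{d1} + b - 9` has no solutions with `d1 ≥ 3` and `0 ≤ b ≤ 9`. -/
theorem lambda4_ne_zero :
    (¬ ∃ (m d1 d2 : ℕ) (a b : ℤ), 3 ≤ d1 ∧ d2 < d1 ∧
        1 ≤ a ∧ a ≤ 9 ∧ 0 ≤ b ∧ b ≤ 9 ∧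
        (9 * 2 ^ m : ℤ) = a * 10 ^ d1 + 9 * (b - a) * 10 ^ d2) ∧
    ∀ (m d1 : ℕ) (b : ℤ), 3 ≤ d1 → 0 ≤ b → b ≤ 9 →
      (2 ^ m : ℤ) ≠ 10 ^ d1 + b - 9 := by
  refine ⟨?_, fun m d1 b => key_part m d1 b⟩
  rintro ⟨m, d1, d2, a, b, hd, hlt, ha, ha', hb, hb', h⟩
  have h9 : (9 : ℤ) ∣ 10 ^ d1 - 1 := by
    simpa using sub_dvd_pow_sub_pow (10 : ℤ) 1 d1
  obtain ⟨c, hc⟩ := h9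
  have hc' : (10 : ℤ) ^ d1 = 9 * c + 1 := by linarith
  have hdv : (9 : ℤ) ∣ a :=
    ⟨2 ^ m - a * c - (b - a) * 10 ^ d2, by rw [hc'] at h; linear_combination -h⟩
  have ha9 : a = 9 := by omega
  subst ha9
  have h' : (2 : ℤ) ^ m = 10 ^ d1 + (b - 9) * 10 ^ d2 := by linarith
  rcases d2 with _ | d2
  · exact key_part m d1 b hd hb hb' (by rw [h']; ring)
  · obtain ⟨e, rfl⟩ := Nat.exists_eq_add_of_le hd
    exact key_five m (200 * 10 ^ e + (b - 9) * 2 * 10 ^ d2) (by rw [h']; ring)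
end
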